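/- Let η ∈ X, let k ≥ 1, and let A ⊆ ℤ. Then there exists a k-soliton γ ∈ Γ_k η with tail T(γ) = A if and only if there exists a k-soliton γ¹ ∈ Γ_k(Tη) with head H(γ¹) = A. In particular, the box-ball dynamics neither creates nor destroys solitons, and the tail of each k-soliton of η becomes the head of a k-soliton of Tη. -/

import Mathlib

open MeasureTheory Filter Finset

/-- A ball configuration: a box at each integer, occupied (`true`) or empty (`false`). -/
abbrev Cfg := ℤ → Bool

/-- Numerical (integer) value of a box. -/
def valZ (b : Bool) : ℤ := if b then 1 else 0

/-- Numerical (real) value of a box. -/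
def valR (b : Bool) : ℝ := if b then 1 else 0

/-- `x` is a record of the configuration `η`:
for every `z ≤ x`, the number of balls in `[z,x]` is strictly smaller than the
number of empty boxes in `[z,x]`. -/
def isRecord (η : Cfg) (x : ℤ) : Prop :=
  ∀ z ≤ x, (∑ y ∈ Finset.Icc z x, valZ (η y)) < ∑ y ∈ Finset.Icc z x, (1 - valZ (η y))

open Classical in
/-- The box-ball (Takahashi–Satsuma) operator `T`. -/
noncomputable def bbsT (η : Cfg) : Cfg := fun x => if isRecord η x then false else !(η x)

/-- `η` has asymptotic density `lam` of balls on both half lines. -/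
def inXlam (lam : ℝ) (η : Cfg) : Prop :=
  Tendsto (fun y : ℕ => (∑ x ∈ Finset.Icc (-(y : ℤ)) 0, valR (η x)) / (y : ℝ))
    atTop (nhds lam) ∧
  Tendsto (fun y : ℕ => (∑ x ∈ Finset.Icc (0 : ℤ) (y : ℤ), valR (η x)) / (y : ℝ))
    atTop (nhds lam)

/-- `η ∈ 𝒳`: it has a well-defined density `0 < lam < 1/2`. -/
def inX (η : Cfg) : Prop := ∃ lam : ℝ, 0 < lam ∧ lam < 1 / 2 ∧ inXlam lam η

/-- `ξ` is a walk lift of the configuration `η`. -/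
def IsLift (η : Cfg) (ξ : ℤ → ℤ) : Prop :=
  ∀ x : ℤ, ξ x - ξ (x - 1) = 2 * valZ (η x) - 1

/-- Running minimum `min_{y ≤ x} ξ(y)` of a walk. -/
noncomputable def runMin (ξ : ℤ → ℤ) (x : ℤ) : ℤ := sInf (ξ '' Set.Iic x)

/-- The box-ball operator on walks: reflection at the running minimum. -/
noncomputable def liftT (ξ : ℤ → ℤ) : ℤ → ℤ := fun x => 2 * runMin ξ x - ξ x

/-- The canonical walk lift of `η` with value `0` at the origin. -/
noncomputable def xi0 (η : Cfg) : ℤ → ℤ := fun x =>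
  if 0 ≤ x then ∑ y ∈ Finset.Icc 1 x, (2 * valZ (η y) - 1)
  else -∑ y ∈ Finset.Icc (x + 1) 0, (2 * valZ (η y) - 1)
/-- Maximal runs of a word of (position, letter) pairs. -/
def runsOf : List (ℤ × Bool) → List (List (ℤ × Bool))
  | [] => []
  | a :: l =>
    match runsOf l with
    | [] => [[a]]
    | r :: rs =>
      if (r.head?.map Prod.snd) = some a.2 then (a :: r) :: rs else [a] :: r :: rs

/-- Takahashi–Satsuma step: find the leftmost run whose length is at least the
length of the run preceding it; the soliton consists of the preceding run
together with the first (that many) letters of the selected run. -/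
def findSoliton : List (List (ℤ × Bool)) → Option (List (ℤ × Bool))
  | r1 :: r2 :: rest =>
    if r1.length ≤ r2.length then some (r1 ++ r2.take r1.length)
    else findSoliton (r2 :: rest)
  | _ => none

/-- Iterated Takahashi–Satsuma algorithm (with fuel): repeatedly identify the
soliton given by `findSoliton` and remove its letters from the word. -/
def tsAux : ℕ → List (ℤ × Bool) → List (List (ℤ × Bool))
  | 0, _ => []
  | fuel + 1, w =>
    match findSoliton (runsOf w) with
    | none => []
    | some s => s :: tsAux fuel (w.filter (fun a => !((s.map Prod.fst).contains a.1)))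

/-- The solitons identified by the Takahashi–Satsuma algorithm in a finite word. -/
def tsSolitons (w : List (ℤ × Bool)) : List (List (ℤ × Bool)) := tsAux w.length w

/-- The word (with positions) strictly between sites `y1` and `y2`. -/
def excursionWord (η : Cfg) (y1 y2 : ℤ) : List (ℤ × Bool) :=
  (List.range (y2 - y1 - 1).toNat).map fun n => (y1 + 1 + n, η (y1 + 1 + n))

/-- `Γ_k η`: the set of `k`-solitons of `η`, each identified with the set of `2k`
sites it occupies.  A `k`-soliton is obtained by applying the Takahashi–Satsuma
algorithm to an excursion of `η` (the word between two consecutive records). -/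
def Gamma (η : Cfg) (k : ℕ) : Set (Finset ℤ) :=
  {γ | ∃ y1 y2 : ℤ, y1 < y2 ∧ isRecord η y1 ∧ isRecord η y2 ∧
    (∀ z : ℤ, y1 < z → z < y2 → ¬ isRecord η z) ∧
    ∃ s ∈ tsSolitons (excursionWord η y1 y2), s.length = 2 * k ∧
      γ = (s.map Prod.fst).toFinset}

/-- The head of a soliton `γ` of `η`: the positions of its ones. -/
def headF (η : Cfg) (γ : Finset ℤ) : Finset ℤ := γ.filter fun x => η x = true

/-- The tail of a soliton `γ` of `η`: the positions of its zeros. -/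
def tailF (η : Cfg) (γ : Finset ℤ) : Finset ℤ := γ.filter fun x => η x = false


/-! ### Seat-number automaton -/

/-- Seat states: which seats of the carrier are occupied. -/
abbrev SeatSt := ℕ → Bool

open Classical in
/-- Label (seat number, starting from 1; 0 if no seat is available) of a letter. -/
noncomputable def seatLabel (S : SeatSt) (b : Bool) : ℕ :=
  if h : ∃ j, S j ≠ b then Nat.find h + 1 else 0

open Classical in
/-- Next state. -/
noncomputable def seatNext (S : SeatSt) (b : Bool) : SeatSt :=
  if h : ∃ j, S j ≠ b then Function.update S (Nat.find h) b else S

/-- Empty carrier. -/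
def emptySt : SeatSt := fun _ => false

lemma seat_of_least {S : SeatSt} {b : Bool} {m : ℕ} (h1 : S m = !b) (h2 : ∀ j < m, S j = b) :
    seatLabel S b = m + 1 ∧ seatNext S b = Function.update S m b := by
  have h : ∃ j, S j ≠ b := ⟨m, by simp [h1]⟩
  have hm : Nat.find h = m := by
    rw [Nat.find_eq_iff]
    exact ⟨by simp [h1], fun n hn => by simp [h2 n hn]⟩
  unfold seatLabel seatNext
  simp [dif_pos h, hm]

lemma seat_of_none {S : SeatSt} {b : Bool} (h1 : ∀ j, S j = b) :
    seatLabel S b = 0 ∧ seatNext S b = S := by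
  have h : ¬ ∃ j, S j ≠ b := by simp [h1]
  unfold seatLabel seatNext
  simp [dif_neg h]

lemma seat_cases (S : SeatSt) (b : Bool) :
    (∀ j, S j = b) ∨ ∃ m, S m = !b ∧ ∀ j < m, S j = b := by
  classical
  by_cases h : ∃ j, S j ≠ b
  · right
    refine ⟨Nat.find h, ?_, fun j hj => ?_⟩
    · have := Nat.find_spec h
      revert this; cases S (Nat.find h) <;> cases b <;> simp
    · have := Nat.find_min h hj
      simpa using this
  · left; simpa using h

/-- Run the automaton. -/
noncomputable def runSt (S : SeatSt) : List (ℤ × Bool) → SeatSt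
  | [] => S
  | a :: w => runSt (seatNext S a.2) w

/-- `L` gives the labels of the letters of the word. -/
def Compat (L : ℤ → ℕ) : SeatSt → List (ℤ × Bool) → Prop
  | _, [] => True
  | S, a :: w => L a.1 = seatLabel S a.2 ∧ Compat L (seatNext S a.2) w

lemma runSt_append (S : SeatSt) (u v : List (ℤ × Bool)) :
    runSt S (u ++ v) = runSt (runSt S u) v := by
  induction u generalizing S with
  | nil => rfl
  | cons a u ih => simp [runSt, ih]

lemma compat_append (L : ℤ → ℕ) (S : SeatSt) (u v : List (ℤ × Bool)) :
    Compat L S (u ++ v) ↔ Compat L S u ∧ Compat L (runSt S u) v := by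
  induction u generalizing S with
  | nil => simp [Compat, runSt]
  | cons a u ih => simp [Compat, runSt, ih, and_assoc]

lemma run_block (b : Bool) (r : List (ℤ × Bool)) (hr : ∀ a ∈ r, a.2 = b) (i : ℕ) (S : SeatSt)
    (h1 : ∀ j < i, S j = b) (h2 : ∀ j, i ≤ j → j < i + r.length → S j = !b) :
    (runSt S r = fun j => if i ≤ j ∧ j < i + r.length then b else S j) ∧
    ∀ L, Compat L S r → r.map (fun a => L a.1) = List.range' (i + 1) r.length := by
  induction r generalizing i S with
  | nil =>
    refine ⟨?_, fun L _ => by simp⟩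
    funext j
    simp [runSt]
  | cons a r ih =>
    have ha : a.2 = b := hr a (by simp)
    obtain ⟨e1, e2⟩ := seat_of_least (S := S) (b := b) (m := i)
      (h2 i le_rfl (by simp)) h1
    have hlen : (a :: r).length = r.length + 1 := rfl
    obtain ⟨ih1, ih2⟩ := ih (fun a ha => hr a (by simp [ha])) (i + 1) (seatNext S b)
      (by
        intro j hj
        rw [e2]
        by_cases hji : j = i
        · simp [hji]
        · rw [Function.update_of_ne hji]; exact h1 j (by omega))
      (by
        intro j hj hj'
        rw [e2, Function.update_of_ne (by omega)]
        exact h2 j (by omega) (by omega))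
    refine ⟨?_, ?_⟩
    · simp only [runSt, ha]
      rw [ih1]
      funext j
      rw [e2]
      by_cases hji : j = i
      · subst hji
        simp
      · rw [Function.update_of_ne hji]
        have : (i + 1 ≤ j ∧ j < i + 1 + r.length) ↔ (i ≤ j ∧ j < i + (a :: r).length) := by
          rw [hlen]; omega
        simp only [this]
    · intro L hL
      simp only [Compat, ha] at hL
      simp only [List.map_cons, List.length_cons, List.range'_succ]
      rw [ih2 L hL.2, hL.1, e1]

/-- Block starting from seat 0. -/
lemma run_block0 (b : Bool) (r : List (ℤ × Bool)) (hr : ∀ a ∈ r, a.2 = b) (S : SeatSt)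
    (h2 : ∀ j, j < r.length → S j = !b) :
    (runSt S r = fun j => if j < r.length then b else S j) ∧
    ∀ L, Compat L S r → r.map (fun a => L a.1) = List.range' 1 r.length := by
  have := run_block b r hr 0 S (by simp) (by simpa using h2)
  simpa using this

/-! ### Runs -/

/-- A list of alternating nonempty runs, the first having letter `b`. -/
def IsRuns : Bool → List (List (ℤ × Bool)) → Prop
  | _, [] => True
  | b, r :: rs => r ≠ [] ∧ (∀ a ∈ r, a.2 = b) ∧ IsRuns (!b) rs

lemma runsOf_spec (w : List (ℤ × Bool)) : (runsOf w).flatten = w ∧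
    (∀ a l, w = a :: l → IsRuns a.2 (runsOf w) ∧ runsOf w ≠ []) := by
  induction w with
  | nil => simp [runsOf]
  | cons a l ih =>
    obtain ⟨ih1, ih2⟩ := ih
    cases l with
    | nil =>
      simp [runsOf, IsRuns]
    | cons c l =>
      obtain ⟨h3, h4⟩ := ih2 c l rfl
      have hdef : runsOf (a :: c :: l) = match runsOf (c :: l) with
        | [] => [[a]]
        | r :: rs =>
          if (r.head?.map Prod.snd) = some a.2 then (a :: r) :: rs else [a] :: r :: rs := rfl
      cases hR : runsOf (c :: l) with
      | nil => exact absurd hR h4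
      | cons r rs =>
        rw [hR] at h3 ih1 hdef
        obtain ⟨g1, g2, g3⟩ := h3
        cases r with
        | nil => exact absurd rfl g1
        | cons d r =>
          have hd : d.2 = c.2 := g2 d (by simp)
          simp only [List.head?_cons, Option.map_some, Option.some.injEq] at hdef
          by_cases hc : d.2 = a.2
          · rw [if_pos hc] at hdef
            rw [hdef]
            refine ⟨by simpa using ih1, ?_⟩
            intro a' l' e
            obtain ⟨rfl, -⟩ := List.cons.inj e
            refine ⟨⟨by simp, ?_, ?_⟩, by simp⟩
            · intro x hx
              rcases List.mem_cons.1 hx with rfl | hx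
              · rfl
              · rw [g2 x hx, ← hd, hc]
            · rw [← hc, hd]; exact g3
          · rw [if_neg hc] at hdef
            rw [hdef]
            refine ⟨by simpa using ih1, ?_⟩
            intro a' l' e
            obtain ⟨rfl, -⟩ := List.cons.inj e
            have : (!a.2) = c.2 := by
              rw [← hd]; revert hc; cases d.2 <;> cases a.2 <;> simp
            refine ⟨⟨by simp, by simp, ?_⟩, by simp⟩
            rw [this]
            exact ⟨g1, g2, g3⟩

/-- Result of one Takahashi–Satsuma step. -/
structure StepOK (S : SeatSt) (w s pre r1 r2 post : List (ℤ × Bool)) (b : Bool) : Prop where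
  weq : w = pre ++ (r1 ++ r2) ++ post
  seq : s = r1 ++ r2
  len : r1.length = r2.length
  ne : r1 ≠ []
  l1 : ∀ a ∈ r1, a.2 = b
  l2 : ∀ a ∈ r2, a.2 = !b
  run : runSt S w = runSt S (pre ++ post)
  comp : ∀ L, Compat L S w → Compat L S (pre ++ post) ∧
    r1.map (fun a => L a.1) = List.range' 1 r1.length ∧
    r2.map (fun a => L a.1) = List.range' 1 r1.length ∧
    ∀ x, pre.getLast? = some x → r1.length < L x.1

lemma step_aux (rs : List (List (ℤ × Bool))) (s : List (ℤ × Bool)) (b : Bool) (S : SeatSt)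
    (hf : findSoliton rs = some s) (hr : IsRuns b rs)
    (hS : ∀ r rest, rs = r :: rest → ∀ j < r.length, S j = !b) :
    ∃ pre r1 r2 post b', StepOK S rs.flatten s pre r1 r2 post b' ∧
      ∀ r rest, rs = r :: rest → r1.length ≤ r.length := by
  induction rs generalizing S b with
  | nil => simp [findSoliton] at hf
  | cons r1 rs ih =>
    cases rs with
    | nil => simp [findSoliton] at hf
    | cons r2 rest =>
      obtain ⟨g1, g2, hr'⟩ := hr
      obtain ⟨B1, B2⟩ := run_block0 b r1 g2 S (hS r1 _ rfl)
      simp only [findSoliton] at hf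
      by_cases hle : r1.length ≤ r2.length
      · rw [if_pos hle] at hf
        obtain ⟨g3, g4, -⟩ := hr'
        have g5 : ∀ a ∈ r2.take r1.length, a.2 = !b := fun a ha => g4 a (List.mem_of_mem_take ha)
        have hl : (r2.take r1.length).length = r1.length := by simp [hle]
        obtain ⟨C1, C2⟩ := run_block0 (!b) (r2.take r1.length) g5 (runSt S r1)
          (by rw [hl, B1]; intro j hj; simp [hj])
        have hrun : runSt (runSt S r1) (r2.take r1.length) = S := by
          rw [C1, hl, B1]
          funext j
          by_cases hj : j < r1.length
          · simp [hj, hS r1 _ rfl j hj]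
          · simp [hj]
        have hw : (r1 :: r2 :: rest).flatten =
            [] ++ (r1 ++ r2.take r1.length) ++ (r2.drop r1.length ++ rest.flatten) := by
          have := List.take_append_drop r1.length r2
          simp only [List.flatten_cons, List.nil_append, List.append_assoc]
          rw [← List.append_assoc (r2.take _), this]
        refine ⟨[], r1, r2.take r1.length, r2.drop r1.length ++ rest.flatten, b, ?_, ?_⟩
        · refine ⟨hw, by simpa using hf.symm, hl.symm, g1, g2, g5, ?_, ?_⟩
          · rw [hw]
            simp only [List.nil_append]
            rw [runSt_append S (r1 ++ _), runSt_append S r1, hrun]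
          · intro L hL
            rw [hw] at hL
            simp only [List.nil_append] at hL ⊢
            rw [compat_append, compat_append, runSt_append, hrun] at hL
            obtain ⟨⟨c1, c2⟩, c3⟩ := hL
            refine ⟨c3, B2 L c1, ?_, by simp⟩
            rw [C2 L c2, hl]
        · intro r rest' e
          obtain ⟨rfl, -⟩ := List.cons.inj e
          exact le_rfl
      · rw [if_neg hle] at hf
        obtain ⟨pre, q1, q2, post, b', ok, hk⟩ := ih (!b) (runSt S r1) hf hr' (by
          intro r rest' e j hj
          obtain ⟨rfl, -⟩ := List.cons.inj e
          rw [B1]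
          have : j < r1.length := by omega
          simp [this])
        have hk' := hk r2 rest rfl
        refine ⟨r1 ++ pre, q1, q2, post, b', ?_, ?_⟩
        · have hw : (r1 :: r2 :: rest).flatten = r1 ++ (r2 :: rest).flatten := rfl
          refine ⟨?_, ok.seq, ok.len, ok.ne, ok.l1, ok.l2, ?_, ?_⟩
          · rw [hw, ok.weq]; simp
          · rw [hw, List.append_assoc, runSt_append, runSt_append, ok.run]
          · intro L hL
            rw [hw, compat_append] at hL
            obtain ⟨d1, d2, d3, d4⟩ := ok.comp L hL.2
            refine ⟨?_, d2, d3, ?_⟩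
            · rw [List.append_assoc, compat_append]
              exact ⟨hL.1, d1⟩
            · intro x hx
              rw [List.getLast?_append] at hx
              cases hp : pre.getLast? with
              | some y =>
                rw [hp] at hx
                simp at hx
                subst hx
                exact d4 y hp
              | none =>
                rw [hp] at hx
                simp only [Option.none_or] at hx
                have e := B2 L hL.1
                have e2 : (r1.map (fun a => L a.1)).getLast? = some (L x.1) := by
                  rw [List.getLast?_map, hx]; rfl
                rw [e, List.getLast?_range'] at e2
                have h0 : r1.length ≠ 0 := by simpa using g1
                simp [h0] at e2
                omega
        · intro r rest' e
          obtain ⟨rfl, -⟩ := List.cons.inj e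
          omega

/-! ### Dyck words -/

/-- Balance of a word. -/
def bal : List (ℤ × Bool) → ℤ
  | [] => 0
  | a :: w => (2 * valZ a.2 - 1) + bal w

lemma bal_append (u v : List (ℤ × Bool)) : bal (u ++ v) = bal u + bal v := by
  induction u with
  | nil => simp [bal]
  | cons a u ih => simp [bal, ih]; ring

lemma bal_block (b : Bool) (r : List (ℤ × Bool)) (hr : ∀ a ∈ r, a.2 = b) :
    bal r = (2 * valZ b - 1) * r.length := by
  induction r with
  | nil => simp [bal]
  | cons a r ih =>
    simp only [bal, List.length_cons]
    rw [ih (fun a ha => hr a (by simp [ha])), hr a (by simp)]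
    push_cast; ring

/-- Dyck words. -/
def Dyck (w : List (ℤ × Bool)) : Prop := bal w = 0 ∧ ∀ p q, w = p ++ q → 0 ≤ bal p

lemma Dyck.remove {pre m post : List (ℤ × Bool)} (h : Dyck (pre ++ m ++ post)) (hm : bal m = 0) :
    Dyck (pre ++ post) := by
  refine ⟨?_, ?_⟩
  · have := h.1
    simp only [bal_append] at this ⊢
    omega
  · intro p q e
    rcases List.append_eq_append_iff.1 e with ⟨c, hc1, hc2⟩ | ⟨c, hc1, hc2⟩
    · have := h.2 (pre ++ m ++ c) q (by rw [hc2]; simp)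
      subst hc1
      simp only [bal_append] at this ⊢
      omega
    · exact h.2 p (c ++ m ++ post) (by rw [hc1]; simp)

lemma find_none_bal (rs : List (List (ℤ × Bool))) (b : Bool) (hf : findSoliton rs = none)
    (hr : IsRuns b rs) : ∀ r rest, rs = r :: rest →
      0 < (2 * valZ b - 1) * bal rs.flatten ∧ (2 * valZ b - 1) * bal rs.flatten ≤ r.length := by
  induction rs generalizing b with
  | nil => simp
  | cons r1 rs ih =>
    intro r rest e
    obtain ⟨rfl, rfl⟩ := List.cons.inj e
    obtain ⟨g1, g2, g3⟩ := hr
    have hb := bal_block b r1 g2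
    have hsq : (2 * valZ b - 1) * (2 * valZ b - 1) = 1 := by cases b <;> simp [valZ]
    have hpos : 0 < r1.length := List.length_pos_iff.2 g1
    simp only [List.flatten_cons, bal_append, mul_add]
    rw [hb, ← mul_assoc, hsq]
    cases rs with
    | nil => simp [bal]; exact hpos
    | cons r2 rest =>
      simp only [findSoliton] at hf
      by_cases hle : r1.length ≤ r2.length
      · rw [if_pos hle] at hf; simp at hf
      · rw [if_neg hle] at hf
        have := ih (!b) hf g3 r2 rest rfl
        have hv : (2 * valZ (!b) - 1) = - (2 * valZ b - 1) := by cases b <;> simp [valZ]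
        rw [hv] at this
        constructor <;> nlinarith [this.1, this.2]

lemma step_main (w : List (ℤ × Bool)) (hw : Dyck w) (hne : w ≠ []) :
    ∃ s pre r1 r2 post b, findSoliton (runsOf w) = some s ∧
      StepOK emptySt w s pre r1 r2 post b ∧ Dyck (pre ++ post) := by
  cases w with
  | nil => exact absurd rfl hne
  | cons a l =>
    obtain ⟨hfl, hsp⟩ := runsOf_spec (a :: l)
    obtain ⟨hruns, hrne⟩ := hsp a l rfl
    have ha : a.2 = true := by
      have := hw.2 [a] l rfl
      revert this
      simp only [bal]
      cases a.2 <;> simp [valZ]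
    cases hf : findSoliton (runsOf (a :: l)) with
    | none =>
      exfalso
      cases hR : runsOf (a :: l) with
      | nil => exact hrne hR
      | cons r rest =>
        have := (find_none_bal _ _ hf hruns r rest hR).1
        rw [hfl, hw.1] at this
        simp at this
    | some s =>
      obtain ⟨pre, r1, r2, post, b, ok, -⟩ := step_aux _ s a.2 emptySt hf hruns
        (by intro r rest _ j _; simp [emptySt, ha])
      rw [hfl] at ok
      refine ⟨s, pre, r1, r2, post, b, rfl, ok, ?_⟩
      have := hw
      rw [ok.weq] at this
      refine this.remove ?_
      rw [bal_append, bal_block b r1 ok.l1, bal_block (!b) r2 ok.l2, ok.len]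
      cases b <;> simp [valZ]

lemma dyck_run (n : ℕ) (w : List (ℤ × Bool)) (hn : w.length ≤ n) (hw : Dyck w) :
    runSt emptySt w = emptySt := by
  induction n generalizing w with
  | zero =>
    have : w = [] := by simpa using hn
    subst this; rfl
  | succ n ih =>
    by_cases hne : w = []
    · subst hne; rfl
    · obtain ⟨s, pre, r1, r2, post, b, -, ok, hd⟩ := step_main w hw hne
      rw [ok.run]
      refine ih _ ?_ hd
      have := congrArg List.length ok.weq
      have h0 : 0 < r1.length := List.length_pos_iff.2 ok.ne
      simp at this ⊢
      omega

/-! ### The algorithm on Dyck words -/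

/-- Gap relation. -/
def GapR (L : ℤ → ℕ) (a b : ℤ) : Prop := a < b ∧ ∀ z, a < z → z < b → L z < L a

/-- Gap relation on letters. -/
def GapP (L : ℤ → ℕ) (a b : ℤ × Bool) : Prop := GapR L a.1 b.1

/-- Good solitons. -/
def SolOK (L : ℤ → ℕ) (s : List (ℤ × Bool)) : Prop :=
  ∃ r1 r2 b k, s = r1 ++ r2 ∧ 1 ≤ k ∧ (∀ a ∈ r1, a.2 = b) ∧ (∀ a ∈ r2, a.2 = !b) ∧
    r1.map (fun a => L a.1) = List.range' 1 k ∧ r2.map (fun a => L a.1) = List.range' 1 k ∧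
    r1.IsChain (GapP L) ∧ r2.IsChain (GapP L)

lemma gap_join (L : ℤ → ℕ) (n : ℕ) (y : ℤ × Bool) (s : List (ℤ × Bool)) (c : ℤ × Bool)
    (h : (c :: (s ++ [y])).IsChain (GapP L)) (hc : L c.1 ≤ n) (hs : ∀ a ∈ s, L a.1 < n) :
    c.1 < y.1 ∧ ∀ z, c.1 < z → z < y.1 → L z < n := by
  induction s generalizing c with
  | nil =>
    simp [GapP, GapR] at h
    exact ⟨h.1, fun z h1 h2 => lt_of_lt_of_le (h.2 z h1 h2) hc⟩
  | cons d s ih =>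
    rw [List.cons_append, List.isChain_cons_cons] at h
    have hd := hs d (by simp)
    obtain ⟨i1, i2⟩ := ih d h.2 hd.le (fun a ha => hs a (by simp [ha]))
    refine ⟨h.1.1.trans i1, fun z h1 h2 => ?_⟩
    rcases lt_trichotomy z d.1 with hz | hz | hz
    · exact lt_of_lt_of_le (h.1.2 z h1 hz) hc
    · rw [hz]; exact hd
    · exact i2 z hz h2

lemma chain_remove (L : ℤ → ℕ) (k : ℕ) (pre s post : List (ℤ × Bool))
    (h : (pre ++ s ++ post).IsChain (GapP L))
    (hpre : ∀ x, pre.getLast? = some x → k < L x.1) (hs : ∀ a ∈ s, L a.1 ≤ k) :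
    (pre ++ post).IsChain (GapP L) := by
  rw [List.isChain_append]
  have h1 := h
  rw [List.append_assoc, List.isChain_append] at h1
  have h2 := h
  rw [List.isChain_append] at h2
  refine ⟨h1.1, h2.2.1, ?_⟩
  intro x hx y hy
  have hx' : pre.getLast? = some x := hx
  have hy' : post.head? = some y := hy
  obtain ⟨p, rfl⟩ := List.getLast?_eq_some_iff.1 hx'
  obtain ⟨q, rfl⟩ := List.head?_eq_some_iff.1 hy'
  have hch : (x :: (s ++ [y])).IsChain (GapP L) := by
    refine h.infix ⟨p, q, ?_⟩
    simp
  have hk := hpre x hx'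
  exact gap_join L (L x.1) y s x hch le_rfl (fun a ha => lt_of_le_of_lt (hs a ha) hk)

lemma mem_range_le {L : ℤ → ℕ} {r : List (ℤ × Bool)} {k : ℕ}
    (h : r.map (fun a => L a.1) = List.range' 1 k) : ∀ a ∈ r, 1 ≤ L a.1 ∧ L a.1 ≤ k := by
  intro a ha
  have : L a.1 ∈ r.map (fun a => L a.1) := List.mem_map.2 ⟨a, ha, rfl⟩
  rw [h, List.mem_range'_1] at this
  omega

lemma chain_pairwise {L : ℤ → ℕ} {w : List (ℤ × Bool)} (h : w.IsChain (GapP L)) :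
    w.Pairwise (fun a b => a.1 < b.1) := by
  have : w.IsChain (fun a b : ℤ × Bool => a.1 < b.1) := h.imp (fun a b hab => hab.1)
  have tr : IsTrans (ℤ × Bool) (fun a b : ℤ × Bool => a.1 < b.1) := ⟨fun a b c h1 h2 => h1.trans h2⟩
  exact List.isChain_iff_pairwise.1 this

lemma filter_remove {pre s post : List (ℤ × Bool)}
    (h : (pre ++ s ++ post).Pairwise (fun a b => a.1 < b.1)) :
    (pre ++ s ++ post).filter (fun a => !((s.map Prod.fst).contains a.1)) = pre ++ post := by
  rw [List.pairwise_append, List.pairwise_append] at h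
  obtain ⟨⟨-, -, h1⟩, -, h2⟩ := h
  rw [List.filter_append, List.filter_append]
  have e1 : pre.filter (fun a => !((s.map Prod.fst).contains a.1)) = pre := by
    rw [List.filter_eq_self]
    intro a ha
    simp only [Bool.not_eq_true', List.contains_eq_mem, decide_eq_false_iff_not, List.mem_map, not_exists, not_and]
    intro x hx e
    have := h1 a ha x hx
    omega
  have e2 : s.filter (fun a => !((s.map Prod.fst).contains a.1)) = [] := by
    rw [List.filter_eq_nil_iff]
    intro a ha
    simp only [Bool.not_eq_true', List.contains_eq_mem, decide_eq_false_iff_not, List.mem_map, not_not]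
    exact ⟨a, ha, rfl⟩
  have e3 : post.filter (fun a => !((s.map Prod.fst).contains a.1)) = post := by
    rw [List.filter_eq_self]
    intro a ha
    simp only [Bool.not_eq_true', List.contains_eq_mem, decide_eq_false_iff_not, List.mem_map, not_exists, not_and]
    intro x hx e
    have := h2 x (by simp [hx]) a ha
    omega
  rw [e1, e2, e3]; simp

lemma ts_main (L : ℤ → ℕ) (n : ℕ) (w : List (ℤ × Bool)) (hn : w.length ≤ n) (hw : Dyck w)
    (hc : Compat L emptySt w) (hg : w.IsChain (GapP L)) :
    (∀ s ∈ tsAux n w, SolOK L s ∧ ∀ a ∈ s, a ∈ w) ∧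
    (∀ a ∈ w, ∃ s ∈ tsAux n w, a ∈ s) ∧
    (∀ s ∈ tsAux n w, ∀ t ∈ tsAux n w, ∀ a ∈ s, a ∈ t → s = t) := by
  induction n generalizing w with
  | zero =>
    have : w = [] := by simpa using hn
    subst this; simp [tsAux]
  | succ n ih =>
    by_cases hne : w = []
    · subst hne
      simp [tsAux, runsOf, findSoliton]
    · obtain ⟨s, pre, r1, r2, post, b, hf, ok, hd⟩ := step_main w hw hne
      obtain ⟨c1, c2, c3, c4⟩ := ok.comp L hc
      have hpw := chain_pairwise hg
      have hts : tsAux (n + 1) w = s :: tsAux n (pre ++ post) := by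
        simp only [tsAux, hf]
        rw [← filter_remove (pre := pre) (s := s) (post := post), ok.seq, ← ok.weq]
        rw [ok.seq, ← ok.weq]
        exact hpw
      have hg' := hg
      rw [ok.weq] at hg'
      have hsk : ∀ a ∈ r1 ++ r2, L a.1 ≤ r1.length := by
        intro a ha
        rcases List.mem_append.1 ha with ha | ha
        · exact (mem_range_le c2 a ha).2
        · exact (mem_range_le c3 a ha).2
      have hcr := chain_remove L r1.length pre (r1 ++ r2) post hg' c4 hsk
      have hlen : (pre ++ post).length ≤ n := by
        have := congrArg List.length ok.weq
        have h0 : 0 < r1.length := List.length_pos_iff.2 ok.ne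
        simp at this ⊢
        omega
      obtain ⟨i1, i2, i3⟩ := ih (pre ++ post) hlen hd c1 hcr
      have hmem : ∀ a, a ∈ w ↔ a ∈ s ∨ a ∈ pre ++ post := by
        intro a
        rw [ok.weq, ok.seq]
        simp only [List.mem_append]
        tauto
      have hnot : ∀ a ∈ s, a ∉ pre ++ post := by
        have hp := hpw
        rw [ok.weq, ← ok.seq] at hp
        intro a ha hb
        rw [← filter_remove hp] at hb
        have := (List.mem_filter.1 hb).2
        simp only [Bool.not_eq_true', List.contains_eq_mem, decide_eq_false_iff_not] at this
        exact this (List.mem_map.2 ⟨a, ha, rfl⟩)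
      rw [hts]
      refine ⟨?_, ?_, ?_⟩
      · intro t ht
        rcases List.mem_cons.1 ht with rfl | ht
        · refine ⟨⟨r1, r2, b, r1.length, ok.seq, List.length_pos_iff.2 ok.ne, ok.l1, ok.l2,
            c2, c3, ?_, ?_⟩, fun a ha => (hmem a).2 (Or.inl ha)⟩
          · exact hg'.infix ⟨pre, r2 ++ post, by simp⟩
          · exact hg'.infix ⟨pre ++ r1, post, by simp⟩
        · exact ⟨(i1 t ht).1, fun a ha => (hmem a).2 (Or.inr ((i1 t ht).2 a ha))⟩
      · intro a ha
        rcases (hmem a).1 ha with h | h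
        · exact ⟨s, by simp, h⟩
        · obtain ⟨t, ht, hat⟩ := i2 a h
          exact ⟨t, by simp [ht], hat⟩
      · intro t ht u hu a hat hau
        rcases List.mem_cons.1 ht with e1 | ht' <;> rcases List.mem_cons.1 hu with e2 | hu'
        · rw [e1, e2]
        · exact absurd ((i1 u hu').2 a hau) (hnot a (e1 ▸ hat))
        · exact absurd ((i1 t ht').2 a hat) (hnot a (e2 ▸ hau))
        · exact i3 t ht' u hu' a hat hau

/-! ### Walks and records -/

lemma exists_lift (η : Cfg) : ∃ ξ : ℤ → ℤ, IsLift η ξ := by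
  refine ⟨fun x => ∑ y ∈ Finset.Icc 1 x, (2 * valZ (η y) - 1) -
    ∑ y ∈ Finset.Icc (x + 1) 0, (2 * valZ (η y) - 1), fun x => ?_⟩
  show (_ - _) - (_ - _) = _
  by_cases hx : 1 ≤ x
  · have e1 : Finset.Icc 1 x = insert x (Finset.Icc 1 (x - 1)) := by
      ext y; simp; omega
    have e2 : Finset.Icc (x + 1) 0 = ∅ := by
      ext y; simp; omega
    have e3 : Finset.Icc (x - 1 + 1) 0 = ∅ := by
      ext y; simp; omega
    rw [e1, e2, e3, Finset.sum_insert (by simp)]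
    simp
  · have e1 : Finset.Icc (x - 1 + 1) 0 = insert x (Finset.Icc (x + 1) 0) := by
      ext y; simp; omega
    have e2 : Finset.Icc 1 x = ∅ := by
      ext y; simp; omega
    have e3 : Finset.Icc 1 (x - 1) = ∅ := by
      ext y; simp; omega
    rw [e1, e2, e3, Finset.sum_insert (by simp)]
    simp

lemma lift_sum {η : Cfg} {ξ : ℤ → ℤ} (h : IsLift η ξ) (a b : ℤ) (hab : a - 1 ≤ b) :
    ∑ y ∈ Finset.Icc a b, (2 * valZ (η y) - 1) = ξ b - ξ (a - 1) := by
  induction b, hab using Int.leInduction with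
  | base =>
    have : Finset.Icc a (a - 1) = ∅ := by ext y; simp
    rw [this]; simp
  | succ b hb ih =>
    have e1 : Finset.Icc a (b + 1) = insert (b + 1) (Finset.Icc a b) := by
      ext y; simp; omega
    rw [e1, Finset.sum_insert (by simp), ih, ← h (b + 1)]
    simp

lemma record_iff {η : Cfg} {ξ : ℤ → ℤ} (h : IsLift η ξ) (x : ℤ) :
    isRecord η x ↔ ∀ z < x, ξ x < ξ z := by
  have key : ∀ z ≤ x, ((∑ y ∈ Finset.Icc z x, valZ (η y)) < ∑ y ∈ Finset.Icc z x, (1 - valZ (η y)))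
      ↔ ξ x < ξ (z - 1) := by
    intro z hz
    have := lift_sum h z x (by omega)
    rw [Finset.sum_sub_distrib, ← Finset.mul_sum] at this
    rw [Finset.sum_sub_distrib]
    omega
  constructor
  · intro hr z hz
    have := (key (z + 1) (by omega)).1 (hr (z + 1) (by omega))
    simpa using this
  · intro hr z hz
    exact (key z hz).2 (hr (z - 1) (by omega))

lemma record_false {η : Cfg} {x : ℤ} (h : isRecord η x) : η x = false := by
  have := h x le_rfl
  revert this
  simp only [Finset.Icc_self, Finset.sum_singleton]
  cases η x <;> simp [valZ]

/-- Consecutive records. -/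
def Consec (η : Cfg) (y1 y2 : ℤ) : Prop := y1 < y2 ∧ isRecord η y1 ∧ isRecord η y2 ∧
    (∀ z : ℤ, y1 < z → z < y2 → ¬ isRecord η z)

/-- Records unbounded in both directions. -/
def Nice (η : Cfg) : Prop := (∀ x, ∃ r ≤ x, isRecord η r) ∧ ∀ x, ∃ r ≥ x, isRecord η r

lemma last_record {η : Cfg} (hn : ∀ x, ∃ r ≤ x, isRecord η r) (x : ℤ) :
    ∃ r ≤ x, isRecord η r ∧ ∀ z, r < z → z ≤ x → ¬ isRecord η z := by
  obtain ⟨r0, h0, h1⟩ := hn x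
  obtain ⟨r, ⟨hr1, hr2⟩, hr3⟩ := Int.exists_greatest_of_bdd (P := fun r => r ≤ x ∧ isRecord η r)
    ⟨x, fun z hz => hz.1⟩ ⟨r0, h0, h1⟩
  refine ⟨r, hr1, hr2, fun z hz hz' hz3 => ?_⟩
  have := hr3 z ⟨hz', hz3⟩
  omega

lemma next_record {η : Cfg} (hn : Nice η) (x : ℤ) :
    ∃ r ≥ x, isRecord η r ∧ ∀ z, x ≤ z → z < r → ¬ isRecord η z := by
  obtain ⟨r0, h0, h1⟩ := hn.2 x
  obtain ⟨r, ⟨hr1, hr2⟩, hr3⟩ := Int.exists_least_of_bdd (P := fun r => x ≤ r ∧ isRecord η r)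
    ⟨x, fun z hz => hz.1⟩ ⟨r0, h0, h1⟩
  refine ⟨r, hr1, hr2, fun z hz hz' hz3 => ?_⟩
  have := hr3 z ⟨hz, hz3⟩
  omega

lemma exists_consec {η : Cfg} (hn : Nice η) {x : ℤ} (hx : ¬ isRecord η x) :
    ∃ y1 y2, Consec η y1 y2 ∧ y1 < x ∧ x < y2 := by
  obtain ⟨r, h1, h2, h3⟩ := last_record hn.1 x
  obtain ⟨t, k1, k2, k3⟩ := next_record hn x
  have hr : r ≠ x := by rintro rfl; exact hx h2
  have ht : t ≠ x := by rintro rfl; exact hx k2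
  refine ⟨r, t, ⟨by omega, h2, k2, ?_⟩, by omega, by omega⟩
  intro z hz hz'
  by_cases h : z ≤ x
  · exact h3 z hz h
  · exact k3 z (by omega) hz'

lemma Consec.unique {η : Cfg} {y1 y2 y1' y2' x : ℤ} (h : Consec η y1 y2) (h' : Consec η y1' y2')
    (a : y1 < x) (b : x < y2) (a' : y1' < x) (b' : x < y2') : y1 = y1' ∧ y2 = y2' := by
  obtain ⟨-, p1, p2, p3⟩ := h
  obtain ⟨-, q1, q2, q3⟩ := h'
  constructor
  · rcases lt_trichotomy y1 y1' with h | h | h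
    · exact absurd q1 (p3 y1' h (by omega))
    · exact h
    · exact absurd p1 (q3 y1 h (by omega))
  · rcases lt_trichotomy y2 y2' with h | h | h
    · exact absurd p2 (q3 y2 (by omega) h)
    · exact h
    · exact absurd q2 (p3 y2' (by omega) h)

/-! ### Excursion words -/

lemma exc_def (η : Cfg) (y1 y2 : ℤ) : excursionWord η y1 y2 =
    (List.range (y2 - y1 - 1).toNat).map
      (fun n : ℕ => ((y1 + 1 + (n : ℤ), η (y1 + 1 + (n : ℤ))) : ℤ × Bool)) := by
  unfold excursionWord
  have : (do
      let a ← List.range (y2 - y1 - 1).toNat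
      pure (a : ℤ)) = (List.range (y2 - y1 - 1).toNat).map (fun n : ℕ => (n : ℤ)) := by
    rw [List.map_eq_flatMap]
    rfl
  rw [this, List.map_map]
  rfl

lemma exc_self (η : Cfg) (y : ℤ) : excursionWord η y (y + 1) = [] := by
  simp [excursionWord]

lemma exc_snoc (η : Cfg) (y m : ℤ) (h : y < m) :
    excursionWord η y (m + 1) = excursionWord η y m ++ [(m, η m)] := by
  rw [exc_def, exc_def]
  have e : (m + 1 - y - 1).toNat = (m - y - 1).toNat + 1 := by omega
  rw [e, List.range_succ, List.map_append]
  have : y + 1 + ((m - y - 1).toNat : ℤ) = m := by omega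
  rw [List.map_singleton, this]

lemma exc_mem (η : Cfg) (y1 y2 : ℤ) (a : ℤ × Bool) :
    a ∈ excursionWord η y1 y2 ↔ y1 < a.1 ∧ a.1 < y2 ∧ a.2 = η a.1 := by
  obtain ⟨x, c⟩ := a
  rw [exc_def]
  simp only [List.mem_map, List.mem_range, Prod.mk.injEq]
  constructor
  · rintro ⟨n, hn, rfl, rfl⟩
    refine ⟨by omega, by omega, rfl⟩
  · rintro ⟨h1, h2, h3⟩
    have : y1 + 1 + ((x - y1 - 1).toNat : ℤ) = x := by omega
    exact ⟨(x - y1 - 1).toNat, by omega, this, by rw [this]; exact h3.symm⟩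

lemma exc_chain (η : Cfg) (L : ℤ → ℕ) (y1 y2 : ℤ) :
    (excursionWord η y1 y2).IsChain (GapP L) := by
  rw [List.isChain_iff_getElem]
  intro i hi
  simp only [exc_def, List.getElem_map, List.getElem_range, GapP, GapR]
  push_cast
  refine ⟨by omega, fun z _ _ => by omega⟩

lemma exc_bal {η : Cfg} {ξ : ℤ → ℤ} (h : IsLift η ξ) (y m : ℤ) (hm : y + 1 ≤ m) :
    bal (excursionWord η y m) = ξ (m - 1) - ξ y := by
  induction m, hm using Int.leInduction with
  | base => rw [exc_self]; simp [bal]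
  | succ m hm ih =>
    rw [exc_snoc η y m (by omega), bal_append, ih]
    simp only [bal]
    rw [← h m]
    simp

lemma exc_dyck {η : Cfg} {y1 y2 : ℤ} (hc : Consec η y1 y2) : Dyck (excursionWord η y1 y2) := by
  obtain ⟨ξ, h⟩ := exists_lift η
  obtain ⟨h12, r1, r2, hno⟩ := hc
  have f2 := record_false r2
  rw [record_iff h] at r1 r2
  have hge : ∀ z, y1 ≤ z → z < y2 → ξ y1 ≤ ξ z := by
    by_contra! hcon
    obtain ⟨z0, z1, z2, z3⟩ := hcon
    obtain ⟨z, ⟨q1, q2, q3⟩, q4⟩ := Int.exists_least_of_bdd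
      (P := fun z => y1 ≤ z ∧ z < y2 ∧ ξ z < ξ y1) ⟨y1, fun z hz => hz.1⟩ ⟨z0, z1, z2, z3⟩
    have hne : z ≠ y1 := by rintro rfl; omega
    refine hno z (by omega) q2 ((record_iff h z).2 fun u hu => ?_)
    by_cases hu1 : u < y1
    · exact q3.trans (r1 u hu1)
    · by_contra! hh
      have := q4 u ⟨by omega, by omega, by omega⟩
      omega
  constructor
  · rw [exc_bal h y1 y2 (by omega)]
    have a1 := r2 y1 h12
    have a2 := hge (y2 - 1) (by omega) (by omega)
    have a3 := h y2
    rw [f2] at a3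
    simp [valZ] at a3
    omega
  · intro p q e
    have hl := congrArg List.length e
    simp [exc_def] at hl
    have hp : p = excursionWord η y1 (y1 + 1 + p.length) := by
      have : p = (excursionWord η y1 y2).take p.length := by rw [e]; simp
      conv_lhs => rw [this]
      rw [exc_def, exc_def, ← List.map_take, List.take_range]
      congr 2
      omega
    by_cases hp0 : p.length = 0
    · have : p = [] := by simpa using hp0
      rw [this]; simp [bal]
    rw [hp, exc_bal h _ _ (by omega)]
    have := hge (y1 + 1 + p.length - 1) (by omega) (by omega)
    omega

/-! ### Global seat states -/

/-- Bi-infinite seat process. -/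
structure IsSeat (η : Cfg) (st : ℤ → SeatSt) : Prop where
  rec0 : ∀ x, isRecord η x → st x = emptySt
  rec1 : ∀ x, isRecord η x → st (x - 1) = emptySt
  nxt : ∀ x, st x = seatNext (st (x - 1)) (η x)

lemma exists_seat {η : Cfg} (hn : Nice η) : ∃ st, IsSeat η st := by
  choose lr h1 h2 h3 using last_record hn.1
  have R0 : ∀ x, isRecord η x → runSt emptySt (excursionWord η (lr x) (x + 1)) = emptySt := by
    intro x hx
    have : lr x = x := by
      by_contra hne
      exact h3 x x (by have := h1 x; omega) le_rfl hx
    rw [this, exc_self]; rfl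
  have R1 : ∀ x, isRecord η x →
      runSt emptySt (excursionWord η (lr (x - 1)) (x - 1 + 1)) = emptySt := by
    intro x hx
    rw [sub_add_cancel]
    refine dyck_run _ _ le_rfl (exc_dyck ⟨?_, h2 _, hx, ?_⟩)
    · have := h1 (x - 1); omega
    · intro z hz hz'
      exact h3 (x - 1) z hz (by omega)
  refine ⟨fun x => runSt emptySt (excursionWord η (lr x) (x + 1)), R0, R1, ?_⟩
  intro x
  show runSt emptySt (excursionWord η (lr x) (x + 1)) = seatNext
    (runSt emptySt (excursionWord η (lr (x - 1)) (x - 1 + 1))) (η x)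
  by_cases hx : isRecord η x
  · rw [R0 x hx, R1 x hx, record_false hx]
    exact (seat_of_none (by simp [emptySt])).2.symm
  · have hne : lr x ≠ x := by intro e; exact hx (e ▸ h2 x)
    have g1 := h1 x
    have g2 := h1 (x - 1)
    have e : lr x = lr (x - 1) := by
      rcases lt_trichotomy (lr x) (lr (x - 1)) with h | h | h
      · exact absurd (h2 (x - 1)) (h3 x _ h (by omega))
      · exact h
      · exact absurd (h2 x) (h3 (x - 1) _ h (by omega))
    rw [e, exc_snoc _ _ _ (by omega), runSt_append, sub_add_cancel]
    rfl

/-- The label of a site. -/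
noncomputable def lab (η : Cfg) (st : ℤ → SeatSt) (x : ℤ) : ℕ := seatLabel (st (x - 1)) (η x)

lemma exc_compat {η : Cfg} {st : ℤ → SeatSt} (hs : IsSeat η st) {y : ℤ} (hy : isRecord η y)
    (m : ℤ) (hm : y + 1 ≤ m) : Compat (lab η st) emptySt (excursionWord η y m) ∧
      runSt emptySt (excursionWord η y m) = st (m - 1) := by
  induction m, hm using Int.leInduction with
  | base =>
    rw [exc_self]
    simp [Compat, runSt, hs.rec0 y hy]
  | succ m hm ih =>
    rw [exc_snoc η y m (by omega), compat_append, runSt_append, ih.2]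
    refine ⟨⟨ih.1, rfl, trivial⟩, ?_⟩
    rw [add_sub_cancel_right, hs.nxt m]
    rfl

lemma exc_ts {η : Cfg} {st : ℤ → SeatSt} (hs : IsSeat η st) {y1 y2 : ℤ} (hc : Consec η y1 y2) :
    (∀ s ∈ tsSolitons (excursionWord η y1 y2),
      SolOK (lab η st) s ∧ ∀ a ∈ s, a ∈ excursionWord η y1 y2) ∧
    (∀ a ∈ excursionWord η y1 y2, ∃ s ∈ tsSolitons (excursionWord η y1 y2), a ∈ s) ∧
    (∀ s ∈ tsSolitons (excursionWord η y1 y2), ∀ t ∈ tsSolitons (excursionWord η y1 y2),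
      ∀ a ∈ s, a ∈ t → s = t) :=
  ts_main (lab η st) _ _ le_rfl (exc_dyck hc)
    (exc_compat hs hc.2.1 y2 (by have := hc.1; omega)).1 (exc_chain _ _ _ _)

lemma lab_record {η : Cfg} {st : ℤ → SeatSt} (hs : IsSeat η st) {x : ℤ} (hx : isRecord η x) :
    lab η st x = 0 := by
  unfold lab
  rw [hs.rec1 x hx, record_false hx]
  exact (seat_of_none (by simp [emptySt])).1

lemma lab_nonrecord {η : Cfg} (hn : Nice η) {st : ℤ → SeatSt} (hs : IsSeat η st) {x : ℤ}
    (hx : ¬ isRecord η x) : 1 ≤ lab η st x := by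
  obtain ⟨y1, y2, hc, h1, h2⟩ := exists_consec hn hx
  obtain ⟨t1, t2, -⟩ := exc_ts hs hc
  obtain ⟨s, hs1, hs2⟩ := t2 (x, η x) ((exc_mem _ _ _ _).2 ⟨h1, h2, rfl⟩)
  obtain ⟨r1, r2, b, k, rfl, -, -, -, e1, e2, -⟩ := (t1 s hs1).1
  rcases List.mem_append.1 hs2 with h | h
  · exact (mem_range_le e1 _ h).1
  · exact (mem_range_le e2 _ h).1

/-! ### Coupling of `η` and `Tη` -/

/-- Invariant relating seat states of `η` and `Tη`. -/
def SInv (S S' : SeatSt) : Prop := ∀ i j, i ≤ j → S j = true → S' i = !(S i)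

lemma sinv_one {S S' : SeatSt} (h : SInv S S') : SInv (seatNext S true) (seatNext S' false) := by
  rcases seat_cases S true with hS | ⟨m, m1, m2⟩
  · rw [(seat_of_none hS).2]
    have : ∀ j, S' j = false := fun j => by rw [h j j le_rfl (hS j), hS j]; rfl
    rw [(seat_of_none this).2]
    exact h
  · rw [(seat_of_least m1 m2).2]
    rcases seat_cases S' false with hS' | ⟨m', n1, n2⟩
    · rw [(seat_of_none hS').2]
      intro i j hij hj
      simp only [Function.update_apply] at hj ⊢
      grind [SInv]
    · rw [(seat_of_least n1 n2).2]
      intro i j hij hj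
      simp only [Function.update_apply] at hj ⊢
      unfold SInv at h
      have hA : ∀ i < m, S' i = false := fun i hi => by rw [h i i le_rfl (m2 i hi), m2 i hi]; rfl
      have hB := h m j
      have hC := h i j
      have hD := h m' j
      simp only [Bool.not_true, Bool.not_false] at *
      have hmm : m ≤ m' := by
        by_contra! hh
        rw [hA m' hh] at n1; simp at n1
      grind

lemma sinv_zero {S S' : SeatSt} (h : SInv S S') {m : ℕ} (m1 : S m = !false)
    (m2 : ∀ j < m, S j = false) :
    SInv (seatNext S false) (seatNext S' true) ∧ seatLabel S' true = seatLabel S false := by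
  have n1 : S' m = !true := by rw [h m m le_rfl m1, m1]; rfl
  have n2 : ∀ j < m, S' j = true := fun j hj => by rw [h j m hj.le m1, m2 j hj]; rfl
  refine ⟨?_, by rw [(seat_of_least n1 n2).1, (seat_of_least m1 m2).1]⟩
  rw [(seat_of_least m1 m2).2, (seat_of_least n1 n2).2]
  intro i j hij hj
  simp only [Function.update_apply] at hj ⊢
  have := h i j
  grind

lemma coupling {η : Cfg} (hn : Nice η) {st st' : ℤ → SeatSt} (hs : IsSeat η st)
    (hs' : IsSeat (bbsT η) st') (x : ℤ) :
    SInv (st x) (st' x) ∧ (if η x = false then lab η st x else 0) =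
      (if bbsT η x = true then lab (bbsT η) st' x else 0) := by
  have hstep : ∀ x, SInv (st (x - 1)) (st' (x - 1)) → SInv (st x) (st' x) ∧
      (if η x = false then lab η st x else 0) =
      (if bbsT η x = true then lab (bbsT η) st' x else 0) := by
    intro x hI
    by_cases hx : isRecord η x
    · have hb : bbsT η x = false := by simp [bbsT, hx]
      refine ⟨?_, ?_⟩
      · rw [hs.rec0 x hx]
        intro i j _ hj
        simp [emptySt] at hj
      · rw [hb, lab_record hs hx]; simp
    · have hb : bbsT η x = !(η x) := by simp [bbsT, hx]
      rw [hs.nxt x, hs'.nxt x, hb]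
      cases he : η x with
      | true =>
        exact ⟨sinv_one hI, by simp⟩
      | false =>
        have hl := lab_nonrecord hn hs hx
        unfold lab at hl ⊢
        rw [hb]
        rw [he] at hl ⊢
        rcases seat_cases (st (x - 1)) false with h0 | ⟨m, m1, m2⟩
        · rw [(seat_of_none h0).1] at hl; omega
        · obtain ⟨c1, c2⟩ := sinv_zero hI m1 m2
          refine ⟨c1, ?_⟩
          simp [c2]
  obtain ⟨r, hr, hrec⟩ := hn.1 (x - 1)
  have hall : ∀ y, r ≤ y → SInv (st y) (st' y) := by
    intro y hy
    induction y, hy using Int.leInduction with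
    | base =>
      rw [hs.rec0 r hrec]
      intro i j _ hj
      simp [emptySt] at hj
    | succ y hy ih => exact (hstep (y + 1) (by simpa using ih)).1
  exact hstep x (hall _ hr)

/-! ### Label chains -/

/-- `l` carries labels `1, …, k`, with smaller labels in the gaps. -/
def Ch (D : ℤ → ℕ) (l : List ℤ) (k : ℕ) : Prop :=
  l.map D = List.range' 1 k ∧ l.IsChain (GapR D)

/-- A chain which cannot be continued. -/
def Term (D : ℤ → ℕ) (l : List ℤ) (k : ℕ) : Prop :=
  Ch D l k ∧ ¬ ∃ b, Ch D (l ++ [b]) (k + 1)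

lemma Ch.length {D : ℤ → ℕ} {l : List ℤ} {k : ℕ} (h : Ch D l k) : l.length = k := by
  have := congrArg List.length h.1
  simpa using this

lemma Ch.take {D : ℤ → ℕ} {l : List ℤ} {k : ℕ} (h : Ch D l k) (j : ℕ) (hj : j ≤ k) :
    Ch D (l.take j) j := by
  refine ⟨?_, h.2.take j⟩
  rw [List.map_take, h.1]
  obtain ⟨d, rfl⟩ := Nat.exists_eq_add_of_le hj
  rw [← List.range'_append_1, List.take_left' (by simp)]

lemma Ch.snoc {D : ℤ → ℕ} {l : List ℤ} {x : ℤ} {k : ℕ} (h : Ch D (l ++ [x]) (k + 1)) :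
    Ch D l k ∧ D x = k + 1 ∧ ∀ y, l.getLast? = some y → GapR D y x := by
  have hl := h.length
  simp at hl
  have h1 := h.1
  rw [List.map_append, List.range'_1_concat] at h1
  obtain ⟨e1, e2⟩ := List.append_inj' h1 (by simp)
  have h2 := h.2
  rw [List.isChain_append] at h2
  refine ⟨⟨e1, h2.1⟩, ?_, ?_⟩
  · simp at e2; omega
  · intro y hy
    exact h2.2.2 y hy x (by simp)

lemma ch_unique {D : ℤ → ℕ} (k : ℕ) (l l' : List ℤ) (x : ℤ) (h : Ch D (l ++ [x]) (k + 1))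
    (h' : Ch D (l' ++ [x]) (k + 1)) : l = l' := by
  induction k generalizing l l' x with
  | zero =>
    have a := h.length
    have b := h'.length
    simp at a b
    rw [a, b]
  | succ k ih =>
    obtain ⟨a1, -, a3⟩ := h.snoc
    obtain ⟨b1, -, b3⟩ := h'.snoc
    rcases List.eq_nil_or_concat l with rfl | ⟨u, y, rfl⟩
    · have := a1.length; simp at this
    rcases List.eq_nil_or_concat l' with rfl | ⟨u', y', rfl⟩
    · have := b1.length; simp at this
    simp only [List.concat_eq_append] at *
    have g := a3 y (by simp)
    have g' := b3 y' (by simp)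
    have d := a1.snoc.2.1
    have d' := b1.snoc.2.1
    have hy : y = y' := by
      rcases lt_trichotomy y y' with hlt | he | hlt
      · have := g.2 y' hlt g'.1; omega
      · exact he
      · have := g'.2 y hlt g.1; omega
    subst hy
    rw [ih u u' y a1 b1]

lemma ch_prefix {D : ℤ → ℕ} {l l' : List ℤ} {x : ℤ} {k m : ℕ} (h : Ch D (l ++ [x]) (k + 1))
    (h' : Ch D l' m) (hx : x ∈ l') : k + 1 ≤ m ∧ l'.take (k + 1) = l ++ [x] := by
  obtain ⟨i, hi, hix⟩ := List.getElem_of_mem hx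
  have hDx : D x = k + 1 := h.snoc.2.1
  have hlen := h'.length
  have e : D x = i + 1 := by
    have h1 : (l'.map D)[i]'(by simpa using hi) = D x := by simp [hix]
    rw [← h1]
    simp only [h'.1, List.getElem_range']
    omega
  have hik : i = k := by omega
  subst hik
  refine ⟨by omega, ?_⟩
  have ht := h'.take (i + 1) (by omega)
  have hs : l'.take (i + 1) = l'.take i ++ [x] := by
    rw [List.take_succ_eq_append_getElem hi, hix]
  rw [hs] at ht ⊢
  rw [ch_unique i _ _ x ht h]

/-- Characterisation of a family of chains partitioning the labelled sites. -/
lemma family_char {D : ℤ → ℕ} (F : Set (List ℤ))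
    (h1 : ∀ l ∈ F, ∃ k, 1 ≤ k ∧ Ch D l k) (h2 : ∀ x, 1 ≤ D x → ∃ l ∈ F, x ∈ l)
    (h3 : ∀ l ∈ F, ∀ l' ∈ F, ∀ x ∈ l, x ∈ l' → l = l') (l : List ℤ) (k : ℕ) (hk : 1 ≤ k) :
    (l ∈ F ∧ l.length = k) ↔ Term D l k := by
  constructor
  · rintro ⟨hl, hlen⟩
    obtain ⟨k', -, hc⟩ := h1 l hl
    have : k' = k := by rw [← hc.length, hlen]
    subst this
    refine ⟨hc, ?_⟩
    rintro ⟨b, hb⟩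
    obtain ⟨l', hl', hbl⟩ := h2 b (by rw [hb.snoc.2.1]; omega)
    obtain ⟨m, -, hm⟩ := h1 l' hl'
    obtain ⟨hkm, ht⟩ := ch_prefix hb hm hbl
    have hne : l ≠ [] := by rintro rfl; simp at hlen; omega
    obtain ⟨y, hy⟩ := List.exists_mem_of_ne_nil l hne
    have hyl' : y ∈ l' := List.mem_of_mem_take (i := k' + 1) (by rw [ht]; simp [hy])
    have e := h3 l hl l' hl' y hy hyl'
    have := hm.length
    rw [← e] at this
    omega
  · rintro ⟨hc, hno⟩
    have hlen := hc.length
    refine ⟨?_, hlen⟩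
    rcases List.eq_nil_or_concat l with rfl | ⟨u, x, rfl⟩
    · simp at hlen; omega
    simp only [List.concat_eq_append] at *
    obtain ⟨j, rfl⟩ : ∃ j, k = j + 1 := ⟨k - 1, by omega⟩
    obtain ⟨l', hl', hxl⟩ := h2 x (by rw [hc.snoc.2.1]; omega)
    obtain ⟨m, -, hm⟩ := h1 l' hl'
    obtain ⟨hkm, ht⟩ := ch_prefix hc hm hxl
    have hml := hm.length
    rcases Nat.lt_or_ge (j + 1) m with hlt | hge
    · exfalso
      apply hno
      have hi : j + 1 < l'.length := by omega
      refine ⟨l'[j + 1], ?_⟩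
      have := hm.take (j + 1 + 1) (by omega)
      rwa [List.take_succ_eq_append_getElem hi, ht] at this
    · rw [List.take_of_length_le (by omega)] at ht
      rw [← ht]; assumption

/-- Heads (`b = true`) or tails (`b = false`) of the solitons of `η`. -/
def Fam (η : Cfg) (b : Bool) : Set (List ℤ) :=
  {l | ∃ y1 y2, Consec η y1 y2 ∧ ∃ s ∈ tsSolitons (excursionWord η y1 y2),
    l = (s.filter (fun a => a.2 == b)).map Prod.fst}

/-- Labels restricted to letters `b`. -/
noncomputable def labB (η : Cfg) (st : ℤ → SeatSt) (b : Bool) (x : ℤ) : ℕ :=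
  if η x = b then lab η st x else 0

lemma block_ch {η : Cfg} {st : ℤ → SeatSt} {b : Bool} {r : List (ℤ × Bool)} {k : ℕ}
    (hr : ∀ a ∈ r, η a.1 = b) (h1 : r.map (fun a => lab η st a.1) = List.range' 1 k)
    (h2 : r.IsChain (GapP (lab η st))) : Ch (labB η st b) (r.map Prod.fst) k := by
  constructor
  · rw [← h1, List.map_map]
    refine List.map_congr_left fun a ha => ?_
    simp [labB, hr a ha]
  · rw [List.isChain_map]
    refine h2.imp_of_mem_imp fun a c ha hc hac => ?_
    refine ⟨hac.1, fun z hz1 hz2 => ?_⟩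
    have := hac.2 z hz1 hz2
    have e : labB η st b a.1 = lab η st a.1 := by simp [labB, hr a ha]
    rw [e]
    refine lt_of_le_of_lt ?_ this
    unfold labB
    split_ifs <;> simp

lemma sol_ch {η : Cfg} {st : ℤ → SeatSt} (hs : IsSeat η st) {y1 y2 : ℤ} (hc : Consec η y1 y2)
    (b : Bool) {s : List (ℤ × Bool)} (hss : s ∈ tsSolitons (excursionWord η y1 y2)) :
    ∃ k, 1 ≤ k ∧ s.length = 2 * k ∧
      Ch (labB η st b) ((s.filter (fun a => a.2 == b)).map Prod.fst) k := by
  obtain ⟨⟨r1, r2, b', k, rfl, hk, l1, l2, e1, e2, c1, c2⟩, hmem⟩ := (exc_ts hs hc).1 s hss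
  have hη : ∀ a ∈ r1 ++ r2, η a.1 = a.2 := fun a ha =>
    ((exc_mem _ _ _ _).1 (hmem a ha)).2.2.symm
  have n1 := congrArg List.length e1
  have n2 := congrArg List.length e2
  simp at n1 n2
  refine ⟨k, hk, by simp; omega, ?_⟩
  rw [List.filter_append]
  by_cases hb : b' = b
  · subst hb
    have f1 : r1.filter (fun a => a.2 == b') = r1 := by
      rw [List.filter_eq_self]; intro a ha; simp [l1 a ha]
    have f2 : r2.filter (fun a => a.2 == b') = [] := by
      rw [List.filter_eq_nil_iff]; intro a ha; simp [l2 a ha]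
    rw [f1, f2, List.append_nil]
    exact block_ch (fun a ha => by rw [hη a (by simp [ha]), l1 a ha]) e1 c1
  · have hb' : (!b') = b := by revert hb; cases b <;> cases b' <;> simp
    have f1 : r1.filter (fun a => a.2 == b) = [] := by
      rw [List.filter_eq_nil_iff]; intro a ha; simp [l1 a ha, hb]
    have f2 : r2.filter (fun a => a.2 == b) = r2 := by
      rw [List.filter_eq_self]; intro a ha; simp [l2 a ha, hb']
    rw [f1, f2, List.nil_append]
    exact block_ch (fun a ha => by rw [hη a (by simp [ha]), l2 a ha, hb']) e2 c2

lemma fam_char {η : Cfg} (hn : Nice η) {st : ℤ → SeatSt} (hs : IsSeat η st) (b : Bool)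
    (l : List ℤ) (k : ℕ) (hk : 1 ≤ k) :
    (l ∈ Fam η b ∧ l.length = k) ↔ Term (labB η st b) l k := by
  refine family_char (Fam η b) ?_ ?_ ?_ l k hk
  · rintro l ⟨y1, y2, hc, s, hss, rfl⟩
    obtain ⟨k, h1, -, h2⟩ := sol_ch hs hc b hss
    exact ⟨k, h1, h2⟩
  · intro x hx
    have hb : η x = b := by
      by_contra h
      simp [labB, h] at hx
    have hx' : 1 ≤ lab η st x := by simpa [labB, hb] using hx
    have hnr : ¬ isRecord η x := by
      intro h; rw [lab_record hs h] at hx'; omega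
    obtain ⟨y1, y2, hc, h1, h2⟩ := exists_consec hn hnr
    obtain ⟨s, hss, hxs⟩ := (exc_ts hs hc).2.1 (x, η x) ((exc_mem _ _ _ _).2 ⟨h1, h2, rfl⟩)
    refine ⟨_, ⟨y1, y2, hc, s, hss, rfl⟩, ?_⟩
    exact List.mem_map.2 ⟨(x, η x), List.mem_filter.2 ⟨hxs, by simp [hb]⟩, rfl⟩
  · rintro l ⟨y1, y2, hc, s, hss, rfl⟩ l' ⟨y1', y2', hc', s', hss', rfl⟩ x hx hx'
    obtain ⟨a, ha, rfl⟩ := List.mem_map.1 hx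
    obtain ⟨a', ha', he⟩ := List.mem_map.1 hx'
    have m := (List.mem_filter.1 ha).1
    have m' := (List.mem_filter.1 ha').1
    have q := (exc_mem _ _ _ _).1 (((exc_ts hs hc).1 s hss).2 a m)
    have q' := (exc_mem _ _ _ _).1 (((exc_ts hs hc').1 s' hss').2 a' m')
    have haa : a' = a := Prod.ext he (by rw [q.2.2, q'.2.2, he])
    subst haa
    obtain ⟨rfl, rfl⟩ := hc.unique hc' q.1 q.2.1 q'.1 q'.2.1
    rw [(exc_ts hs hc).2.2 s hss s' hss' a' m m']

lemma gamma_char {η : Cfg} (hn : Nice η) {st : ℤ → SeatSt} (hs : IsSeat η st) (b : Bool)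
    (k : ℕ) (hk : 1 ≤ k) (A : Finset ℤ) :
    (∃ γ ∈ Gamma η k, (γ.filter fun x => η x = b) = A) ↔
      ∃ l, Term (labB η st b) l k ∧ l.toFinset = A := by
  have key : ∀ y1 y2, Consec η y1 y2 → ∀ s ∈ tsSolitons (excursionWord η y1 y2),
      ((s.map Prod.fst).toFinset.filter fun x => η x = b) =
        ((s.filter (fun a => a.2 == b)).map Prod.fst).toFinset := by
    intro y1 y2 hc s hss
    have hη : ∀ a ∈ s, a.2 = η a.1 := fun a ha =>
      ((exc_mem _ _ _ _).1 (((exc_ts hs hc).1 s hss).2 a ha)).2.2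
    ext x
    simp only [Finset.mem_filter, List.mem_toFinset, List.mem_map, List.mem_filter, beq_iff_eq]
    constructor
    · rintro ⟨⟨a, ha, rfl⟩, h⟩
      exact ⟨a, ⟨ha, by rw [hη a ha, h]⟩, rfl⟩
    · rintro ⟨a, ⟨ha, h⟩, rfl⟩
      exact ⟨⟨a, ha, rfl⟩, by rw [← hη a ha, h]⟩
  constructor
  · rintro ⟨γ, ⟨y1, y2, h1, h2, h3, h4, s, hss, hlen, rfl⟩, hA⟩
    have hc : Consec η y1 y2 := ⟨h1, h2, h3, h4⟩
    refine ⟨_, (fam_char hn hs b _ k hk).1 ⟨⟨y1, y2, hc, s, hss, rfl⟩, ?_⟩, ?_⟩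
    · obtain ⟨k', -, e, hch⟩ := sol_ch hs hc b hss
      rw [hch.length]; omega
    · rw [← key y1 y2 hc s hss, hA]
  · rintro ⟨l, hT, hA⟩
    obtain ⟨⟨y1, y2, hc, s, hss, rfl⟩, hlen⟩ := (fam_char hn hs b _ k hk).2 hT
    obtain ⟨h1, h2, h3, h4⟩ := hc
    refine ⟨_, ⟨y1, y2, h1, h2, h3, h4, s, hss, ?_, rfl⟩, ?_⟩
    · obtain ⟨k', -, e, hch⟩ := sol_ch hs ⟨h1, h2, h3, h4⟩ b hss
      rw [hch.length] at hlen; omega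
    · rw [key y1 y2 ⟨h1, h2, h3, h4⟩ s hss, hA]

lemma main_of_nice (η : Cfg) (hn : Nice η) (hn' : Nice (bbsT η)) (k : ℕ) (hk : 1 ≤ k)
    (A : Finset ℤ) :
    (∃ γ ∈ Gamma η k, tailF η γ = A) ↔
      ∃ γ1 ∈ Gamma (bbsT η) k, headF (bbsT η) γ1 = A := by
  obtain ⟨st, hs⟩ := exists_seat hn
  obtain ⟨st', hs'⟩ := exists_seat hn'
  have e : labB η st false = labB (bbsT η) st' true := by
    funext x
    exact (coupling hn hs hs' x).2
  unfold tailF headF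
  rw [gamma_char hn hs false k hk A, gamma_char hn' hs' true k hk A, e]

/-! ### Existence of records -/

lemma record_below {η : Cfg} {ξ : ℤ → ℤ} (h : IsLift η ξ)
    (hL : ∀ B : ℤ, ∃ N : ℤ, ∀ x ≤ N, B < ξ x) (z : ℤ) :
    ∃ r ≤ z, isRecord η r ∧ ξ r ≤ ξ z := by
  obtain ⟨N, hN⟩ := hL (ξ z)
  obtain ⟨r, ⟨h1, h2⟩, h3⟩ := Int.exists_least_of_bdd (P := fun r => r ≤ z ∧ ξ r ≤ ξ z)
    ⟨N, fun u hu => by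
      by_contra! hlt
      have := hN u hlt.le
      omega⟩ ⟨z, le_rfl, le_rfl⟩
  refine ⟨r, h1, (record_iff h r).2 fun u hu => ?_, h2⟩
  by_contra! hle
  have := h3 u ⟨by omega, by omega⟩
  omega

lemma last_record_min {η : Cfg} {ξ : ℤ → ℤ} (h : IsLift η ξ)
    (hL : ∀ B : ℤ, ∃ N : ℤ, ∀ x ≤ N, B < ξ x) {x r : ℤ} (hr : isRecord η r)
    (hlast : ∀ z, r < z → z ≤ x → ¬ isRecord η z) (u : ℤ) (hu : u ≤ x) : ξ r ≤ ξ u := by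
  obtain ⟨r', h1, h2, h3⟩ := record_below h hL u
  rcases lt_trichotomy r' r with hlt | he | hlt
  · have := (record_iff h r).1 hr r' hlt
    omega
  · rw [← he]; exact h3
  · exact absurd h2 (hlast r' hlt (by omega))

lemma nice_of_lift {η : Cfg} {ξ : ℤ → ℤ} (h : IsLift η ξ)
    (hL : ∀ B : ℤ, ∃ N : ℤ, ∀ x ≤ N, B < ξ x) (hR : ∀ B : ℤ, ∃ z, ξ z < B) : Nice η := by
  have h1 : ∀ x, ∃ r ≤ x, isRecord η r := fun x => by
    obtain ⟨r, a, b, -⟩ := record_below h hL x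
    exact ⟨r, a, b⟩
  refine ⟨h1, fun x => ?_⟩
  obtain ⟨r, a, b, c⟩ := last_record h1 x
  obtain ⟨z, hz⟩ := hR (ξ r)
  obtain ⟨t, t1, t2, t3⟩ := record_below h hL z
  refine ⟨t, ?_, t2⟩
  by_contra! hlt
  have := last_record_min h hL b c t hlt.le
  omega

lemma lift_bbsT {η : Cfg} {ξ : ℤ → ℤ} (h : IsLift η ξ) (lr : ℤ → ℤ) (h1 : ∀ x, lr x ≤ x)
    (h2 : ∀ x, isRecord η (lr x)) (h3 : ∀ x z, lr x < z → z ≤ x → ¬ isRecord η z) :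
    IsLift (bbsT η) (fun x => 2 * ξ (lr x) - ξ x) := by
  intro x
  show 2 * ξ (lr x) - ξ x - (2 * ξ (lr (x - 1)) - ξ (x - 1)) = _
  have g1 := h1 x
  have g2 := h1 (x - 1)
  have hx1 := h x
  by_cases hx : isRecord η x
  · have hb : bbsT η x = false := by simp [bbsT, hx]
    have e : lr x = x := by
      by_contra hne
      exact h3 x x (by omega) le_rfl hx
    have hc : Consec η (lr (x - 1)) x := ⟨by omega, h2 _, hx, fun z hz hz' =>
      h3 (x - 1) z hz (by omega)⟩
    have hd := (exc_dyck hc).1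
    rw [exc_bal h _ _ (by omega)] at hd
    rw [record_false hx] at hx1
    rw [hb, e]
    simp [valZ] at hx1 ⊢
    omega
  · have hb : bbsT η x = !(η x) := by simp [bbsT, hx]
    have hne : lr x ≠ x := by intro e; exact hx (e ▸ h2 x)
    have e : lr x = lr (x - 1) := by
      rcases lt_trichotomy (lr x) (lr (x - 1)) with h | h | h
      · exact absurd (h2 (x - 1)) (h3 x _ h (by omega))
      · exact h
      · exact absurd (h2 x) (h3 (x - 1) _ h (by omega))
    rw [hb, e]
    cases he : η x <;> simp [valZ, he] at hx1 ⊢ <;> omega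

lemma lift_sum_real {η : Cfg} {ξ : ℤ → ℤ} (h : IsLift η ξ) (a b : ℤ) (hab : a - 1 ≤ b) :
    2 * ∑ y ∈ Finset.Icc a b, valR (η y) - ((b : ℝ) + 1 - a) = (ξ b : ℝ) - ξ (a - 1) := by
  have e := lift_sum h a b hab
  have e2 := congrArg (fun z : ℤ => (z : ℝ)) e
  push_cast at e2
  rw [← e2, Finset.sum_sub_distrib, ← Finset.mul_sum]
  have hc : ((Finset.Icc a b).card : ℝ) = (b : ℝ) + 1 - a := by
    rw [Int.card_Icc]
    have : (((b + 1 - a).toNat : ℤ) : ℝ) = ((b + 1 - a : ℤ) : ℝ) := by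
      rw [Int.toNat_of_nonneg (by omega)]
    push_cast at this
    exact_mod_cast this
  have hv : ∀ c : Bool, ((valZ c : ℤ) : ℝ) = valR c := by
    intro c; cases c <;> simp [valZ, valR]
  simp only [hv, Finset.sum_const, nsmul_eq_mul, mul_one, hc]

lemma nice_both {η : Cfg} (hη : inX η) : Nice η ∧ Nice (bbsT η) := by
  obtain ⟨lam, hl0, hl1, hTL, hTR⟩ := hη
  obtain ⟨ξ, h⟩ := exists_lift η
  obtain ⟨ε, hε, hεl⟩ : ∃ ε : ℝ, 0 < ε ∧ 12 * ε = 1 - 2 * lam :=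
    ⟨(1 - 2 * lam) / 12, by linarith, by ring⟩
  -- right side
  have hR : ∀ B : ℤ, ∃ z, ξ z < B := by
    intro B
    have ev1 := hTR.eventually (gt_mem_nhds (show lam < lam + ε by linarith))
    have ev2 : ∀ᶠ y : ℕ in atTop, ((ξ (-1) : ℝ) - B) / (10 * ε) < (y : ℝ) :=
      tendsto_natCast_atTop_atTop.eventually (eventually_gt_atTop _)
    obtain ⟨y, h1, h2, h3⟩ := (ev1.and (ev2.and (eventually_gt_atTop 0))).exists
    have hy : (0 : ℝ) < y := by exact_mod_cast h3
    rw [div_lt_iff₀ hy] at h1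
    rw [div_lt_iff₀ (by linarith)] at h2
    have e := lift_sum_real h 0 y (by omega)
    simp only [zero_sub, Int.cast_natCast, Int.cast_zero] at e
    refine ⟨y, ?_⟩
    have : (ξ y : ℝ) < B := by nlinarith
    exact_mod_cast this
  -- left side
  obtain ⟨N0, hN0⟩ : ∃ N0 : ℕ, ∀ y : ℕ, N0 ≤ y →
      10 * ε * y + (ξ 0 + 1) ≤ (ξ (-(y : ℤ) - 1) : ℝ) ∧
      (ξ (-(y : ℤ) - 1) : ℝ) ≤ 14 * ε * y + (ξ 0 + 1) := by
    have ev1 := hTL.eventually (gt_mem_nhds (show lam < lam + ε by linarith))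
    have ev2 := hTL.eventually (lt_mem_nhds (show lam - ε < lam by linarith))
    obtain ⟨N0, hN⟩ := eventually_atTop.1 (ev1.and (ev2.and (eventually_gt_atTop 0)))
    refine ⟨N0, fun y hy => ?_⟩
    obtain ⟨h1, h2, h3⟩ := hN y hy
    have hy : (0 : ℝ) < y := by exact_mod_cast h3
    rw [div_lt_iff₀ hy] at h1
    rw [lt_div_iff₀ hy] at h2
    have e := lift_sum_real h (-(y : ℤ)) 0 (by omega)
    push_cast at e
    constructor <;> nlinarith
  have big : ∀ B : ℝ, ∃ N : ℕ, N0 ≤ N ∧ ∀ y : ℕ, N ≤ y → B < 6 * ε * y := by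
    intro B
    obtain ⟨n, hn⟩ := exists_nat_gt (B / (6 * ε))
    rw [div_lt_iff₀ (by linarith)] at hn
    refine ⟨max N0 n, le_max_left _ _, fun y hy => ?_⟩
    have : (n : ℝ) ≤ y := by exact_mod_cast (le_max_right N0 n).trans hy
    nlinarith
  have param : ∀ (N : ℕ) (x : ℤ), x ≤ -(N : ℤ) - 1 → ∃ y : ℕ, N ≤ y ∧ x = -(y : ℤ) - 1 := by
    intro N x hx
    exact ⟨(-x - 1).toNat, by omega, by omega⟩
  have hL : ∀ B : ℤ, ∃ N : ℤ, ∀ x ≤ N, B < ξ x := by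
    intro B
    obtain ⟨N, hN, hB⟩ := big (B - (ξ 0 + 1))
    refine ⟨-(N : ℤ) - 1, fun x hx => ?_⟩
    obtain ⟨y, hy, rfl⟩ := param N x hx
    have a := hB y hy
    have b := (hN0 y (by omega)).1
    have hy0 : (0 : ℝ) ≤ y := by positivity
    have : (B : ℝ) < ξ (-(y : ℤ) - 1) := by nlinarith
    exact_mod_cast this
  have hnice := nice_of_lift h hL hR
  refine ⟨hnice, ?_⟩
  choose lr h1 h2 h3 using last_record hnice.1
  refine nice_of_lift (lift_bbsT h lr h1 h2 h3) ?_ ?_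
  · intro B
    obtain ⟨N, hN, hB⟩ := big (B - (ξ 0 + 1))
    refine ⟨-(N : ℤ) - 1, fun x hx => ?_⟩
    show B < 2 * ξ (lr x) - ξ x
    have hlr := h1 x
    obtain ⟨y, hy, hxy⟩ := param N x hx
    obtain ⟨y', hy', hxy'⟩ := param N (lr x) (by omega)
    have a := hB y hy
    have b := (hN0 y (by omega)).2
    have b' := (hN0 y' (by omega)).1
    rw [← hxy] at b
    rw [← hxy'] at b'
    have hyy : (y : ℝ) ≤ y' := by
      have : y ≤ y' := by omega
      exact_mod_cast this
    have : (B : ℝ) < 2 * ξ (lr x) - ξ x := by nlinarith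
    exact_mod_cast this
  · intro B
    obtain ⟨z, hz⟩ := hR B
    refine ⟨z, ?_⟩
    show 2 * ξ (lr z) - ξ z < B
    have := last_record_min h hL (h2 z) (h3 z) z le_rfl
    omega

/-- **soliton conservation.** Let `η ∈ 𝒳`, `k ≥ 1` and `A ⊆ ℤ`.
There is a `k`-soliton `γ ∈ Γ_k η` with tail `𝒯(γ) = A` if and only if there is
a `k`-soliton `γ¹ ∈ Γ_k(Tη)` with head `ℋ(γ¹) = A`.  In particular the box-ball
dynamics neither creates nor destroys solitons, and the tail of each `k`-soliton
of `η` becomes the head of a `k`-soliton of `Tη`. -/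
theorem soliton_conservation (η : Cfg) (hη : inX η) (k : ℕ) (hk : 1 ≤ k)
    (A : Finset ℤ) :
    (∃ γ ∈ Gamma η k, tailF η γ = A) ↔
      ∃ γ1 ∈ Gamma (bbsT η) k, headF (bbsT η) γ1 = A := by
  exact main_of_nice η (nice_both hη).1 (nice_both hη).2 k hk A
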